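/- Positive homogeneity of the value function with L¹-regularized controls: let A be an n×n real matrix, B an n×m real matrix, and h : ℝⁿ → [0,∞) a function satisfying h(a·x) = a·h(x) for all a > 0 and x ∈ ℝⁿ, and h(0) = 0. Define value functions J_N(x) = h(x) and J_k(x) = ⨅_{u ∈ ℝᵐ} (h(x) + ‖u‖₁ + J_{k+1}(Ax + Bu)) for k < N, where ‖u‖₁ = Σ_i |u_i|. Then for every c > 0, every k = 0,…,N and every x ∈ ℝⁿ, J_k(c·x) = c·J_k(x). -/

import Mathlib

open Matrix
open scoped ENNReal

/-!
Scaling the state and the control simultaneously by `c > 0` maps trajectories to trajectories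
and multiplies every cost by `c`. Since `u ↦ c • u` is a bijection of the control space, the
infimum over controls is multiplied by `c` as well. Hence the Bellman operator preserves positive
homogeneity, and backward induction carries it from the terminal cost to every stage.
-/

open scoped NNReal

/-- Positive homogeneity of degree one, for maps between types acted on by ordered scalars `𝕜`.
The scalars are a parameter because `ℝ≥0∞`-valued costs are only acted on by `ℝ≥0`; nothing is
required at `c = 0`. -/
def IsPosHomogeneous (𝕜 : Type*) {X Y : Type*} [Zero 𝕜] [LT 𝕜] [SMul 𝕜 X] [SMul 𝕜 Y]
    (f : X → Y) : Prop :=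
  ∀ ⦃c : 𝕜⦄, 0 < c → ∀ x, f (c • x) = c • f x

/-- The Bellman (dynamic programming) operator with dynamics `f` and stage cost `ℓ`, both functions
of a state–control pair, acting on the cost-to-go `V`. -/
def bellmanOperator {X U R : Type*} [Add R] [InfSet R] (f : X × U → X) (ℓ : X × U → R)
    (V : X → R) (x : X) : R :=
  ⨅ u, (ℓ (x, u) + V (f (x, u)))

namespace IsPosHomogeneous

section SMul

variable {𝕜 X Y Z : Type*} [Zero 𝕜] [LT 𝕜] [SMul 𝕜 X] [SMul 𝕜 Y] [SMul 𝕜 Z]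

theorem of_mulActionHomClass {F : Type*} [FunLike F X Y] [MulActionHomClass F 𝕜 X Y] (f : F) :
    IsPosHomogeneous 𝕜 f :=
  fun c _ x => map_smul f c x

theorem fst : IsPosHomogeneous 𝕜 (Prod.fst : X × Y → X) :=
  fun _ _ _ => rfl

theorem snd : IsPosHomogeneous 𝕜 (Prod.snd : X × Y → Y) :=
  fun _ _ _ => rfl

theorem comp {g : Y → Z} {f : X → Y} (hg : IsPosHomogeneous 𝕜 g) (hf : IsPosHomogeneous 𝕜 f) :
    IsPosHomogeneous 𝕜 (g ∘ f) := fun c hc x => by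
  simp only [Function.comp_apply, hf hc, hg hc]

end SMul

theorem add {𝕜 X R : Type*} [Zero 𝕜] [LT 𝕜] [SMul 𝕜 X] [AddZeroClass R] [DistribSMul 𝕜 R]
    {f g : X → R} (hf : IsPosHomogeneous 𝕜 f) (hg : IsPosHomogeneous 𝕜 g) :
    IsPosHomogeneous 𝕜 (f + g) := fun c hc x => by
  simp only [Pi.add_apply, hf hc, hg hc, smul_add]

section Bellman

variable {𝕜 X U R : Type*} [GroupWithZero 𝕜] [Preorder 𝕜] [SMul 𝕜 X] [MulAction 𝕜 U]
  [CompleteLattice R]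

theorem iInf_snd [MulAction 𝕜 R] [PosSMulMono 𝕜 R] [PosSMulReflectLE 𝕜 R] {g : X × U → R}
    (hg : IsPosHomogeneous 𝕜 g) : IsPosHomogeneous 𝕜 fun x => ⨅ u, g (x, u) := fun c hc x =>
  calc
    ⨅ u, g (c • x, u) = ⨅ u, g (c • x, c • u) :=
      ((MulAction.surjective₀ hc.ne').iInf_comp fun u => g (c • x, u)).symm
    _ = ⨅ u, c • g (x, u) := iInf_congr fun u => hg hc (x, u)
    _ = c • ⨅ u, g (x, u) := ((OrderIso.smulRight hc).map_iInf _).symm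

theorem bellmanOperator [AddMonoid R] [DistribMulAction 𝕜 R] [PosSMulMono 𝕜 R]
    [PosSMulReflectLE 𝕜 R] {f : X × U → X} {ℓ : X × U → R} {V : X → R}
    (hf : IsPosHomogeneous 𝕜 f) (hℓ : IsPosHomogeneous 𝕜 ℓ) (hV : IsPosHomogeneous 𝕜 V) :
    IsPosHomogeneous 𝕜 (bellmanOperator f ℓ V) :=
  (hℓ.add (hV.comp hf)).iInf_snd

end Bellman

section Real

variable {X Y : Type*} [MulAction ℝ X] [MulAction ℝ Y]

theorem nnreal {f : X → Y} (hf : IsPosHomogeneous ℝ f) : IsPosHomogeneous ℝ≥0 f :=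
  fun _ hc => hf (NNReal.coe_pos.2 hc)

theorem ennreal_ofReal {f : X → ℝ} (hf : IsPosHomogeneous ℝ f) :
    IsPosHomogeneous ℝ≥0 fun x => ENNReal.ofReal (f x) := fun c hc x =>
  calc
    ENNReal.ofReal (f (c • x)) = ENNReal.ofReal (c * f x) := congrArg _ (hf.nnreal hc x)
    _ = c • ENNReal.ofReal (f x) := by
      rw [ENNReal.ofReal_mul c.coe_nonneg, ENNReal.ofReal_coe_nnreal, ENNReal.smul_def,
        smul_eq_mul]

end Real

end IsPosHomogeneous

theorem isPosHomogeneous_sum_abs {𝕜 ι : Type*} [Ring 𝕜] [LinearOrder 𝕜] [IsOrderedRing 𝕜]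
    [Fintype ι] : IsPosHomogeneous 𝕜 fun u : ι → 𝕜 => ∑ i, |u i| := fun c hc u => by
  simp only [Pi.smul_apply, smul_eq_mul, abs_mul, abs_of_pos hc, Finset.mul_sum]

theorem l1_regularized_value_function_homogeneous_general {𝕜 X U R : Type*} [GroupWithZero 𝕜]
    [Preorder 𝕜] [SMul 𝕜 X] [MulAction 𝕜 U] [CompleteLattice R] [AddMonoid R]
    [DistribMulAction 𝕜 R] [PosSMulMono 𝕜 R] [PosSMulReflectLE 𝕜 R] {N : ℕ}
    {f : ℕ → X × U → X} {ℓ : ℕ → X × U → R} {J : ℕ → X → R}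
    (hf : ∀ k < N, IsPosHomogeneous 𝕜 (f k)) (hℓ : ∀ k < N, IsPosHomogeneous 𝕜 (ℓ k))
    (hJN : IsPosHomogeneous 𝕜 (J N))
    (hJ : ∀ k < N, J k = bellmanOperator (f k) (ℓ k) (J (k + 1))) :
    ∀ k ≤ N, IsPosHomogeneous 𝕜 (J k) := fun k hk => by
  induction hk using Nat.decreasingInduction with
  | self => exact hJN
  | of_succ k hk ih => exact hJ k hk ▸ (hf k hk).bellmanOperator (hℓ k hk) ih

/-- Positive homogeneity of the value function with
`L¹`-regularized controls: if `h : ℝⁿ → [0,∞)` satisfies `h (a • x) = a * h x` for all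
`a > 0` and `h 0 = 0`, and `J N x = h x`,
`J k x = ⨅ u, (h x + ‖u‖₁ + J (k+1) (A x + B u))`, then `J k (c • x) = c • J k x` for
every `c > 0`, every `k = 0, …, N`, and every `x ∈ ℝⁿ`. -/
theorem l1_regularized_value_function_homogeneous
    (n m : ℕ) (hn : 0 < n) (hm : 0 < m)
    (N : ℕ) (hN : 1 ≤ N)
    (A : Matrix (Fin n) (Fin n) ℝ) (B : Matrix (Fin n) (Fin m) ℝ)
    (h : (Fin n → ℝ) → ℝ)
    (hh_nonneg : ∀ x, 0 ≤ h x)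
    (hh_homog : ∀ a : ℝ, 0 < a → ∀ x : Fin n → ℝ, h (a • x) = a * h x)
    (hh_zero : h 0 = 0)
    (J : ℕ → (Fin n → ℝ) → ℝ≥0∞)
    (hJN : ∀ x : Fin n → ℝ, J N x = ENNReal.ofReal (h x))
    (hJ : ∀ k < N, ∀ x : Fin n → ℝ,
      J k x = ⨅ u : Fin m → ℝ,
        (ENNReal.ofReal (h x + ∑ i, |u i|) + J (k + 1) (A.mulVec x + B.mulVec u))) :
    ∀ c : ℝ, 0 < c → ∀ k ≤ N, ∀ x : Fin n → ℝ,
      J k (c • x) = ENNReal.ofReal c * J k x := by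
  intro c hc k hk x
  have dynamics_hom : IsPosHomogeneous ℝ≥0
      fun p : (Fin n → ℝ) × (Fin m → ℝ) => A *ᵥ p.1 + B *ᵥ p.2 :=
    (IsPosHomogeneous.of_mulActionHomClass (A.mulVecLin.coprod B.mulVecLin)).nnreal
  have h_hom : IsPosHomogeneous ℝ h := hh_homog
  have stageCost_hom : IsPosHomogeneous ℝ≥0
      fun p : (Fin n → ℝ) × (Fin m → ℝ) => ENNReal.ofReal (h p.1 + ∑ i, |p.2 i|) :=
    ((h_hom.comp .fst).add (isPosHomogeneous_sum_abs.comp .snd)).ennreal_ofReal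
  have terminalCost_hom : IsPosHomogeneous ℝ≥0 (J N) := funext hJN ▸ h_hom.ennreal_ofReal
  lift c to ℝ≥0 using hc.le
  rw [ENNReal.ofReal_coe_nnreal]
  exact l1_regularized_value_function_homogeneous_general (fun _ _ => dynamics_hom)
    (fun _ _ => stageCost_hom) terminalCost_hom (fun k hk => funext (hJ k hk)) k hk
    (NNReal.coe_pos.1 hc) x
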